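/- Let n ≥ k > r ≥ 1, D ∈ ℝ^{n×k}, and X, X̃ ∈ 𝕆^{n×k} with XᵀD ⪰ 0, X̃ᵀD ⪰ 0, and rank(XᵀD) = rank(X̃ᵀD) = r. Let XᵀD = VΣVᵀ and X̃ᵀD = ṼΣ̃Ṽᵀ be spectral decompositions with V, Ṽ ∈ 𝕆^{k×k}, Σ = diag(σ_1, …, σ_r, 0, …, 0), Σ̃ = diag(σ̃_1, …, σ̃_r, 0, …, 0), σ_1 ≥ … ≥ σ_r > 0, σ̃_1 ≥ … ≥ σ̃_r > 0; write V₁ = V_{(:,1:r)}, V₂ = V_{(:,r+1:k)}, Ṽ₁ = Ṽ_{(:,1:r)}, Ṽ₂ = Ṽ_{(:,r+1:k)}. Then for every W̃ ∈ 𝕆^{(k−r)×(k−r)} there exists W ∈ 𝕆^{(k−r)×(k−r)} such that ‖(X̃Ṽ₁Ṽ₁ᵀ + X̃Ṽ₂W̃Ṽ₂ᵀ) − (XV₁V₁ᵀ + XV₂WV₂ᵀ)‖_F ≤ ( √2 + 2√2·‖D‖₂/(σ_r + σ̃_r) + 4‖D‖₂/max{σ_r, σ̃_r} ) · √(k − ‖XᵀX̃‖_F²);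 hence the Hausdorff distance (in Frobenius norm) between the sets 𝕏 = { XV₁V₁ᵀ + XV₂WV₂ᵀ : W ∈ 𝕆^{(k−r)×(k−r)} } and 𝕏̃ = { X̃Ṽ₁Ṽ₁ᵀ + X̃Ṽ₂W̃Ṽ₂ᵀ : W̃ ∈ 𝕆^{(k−r)×(k−r)} } is bounded by the same right-hand side. -/

import Mathlib

open Matrix

noncomputable def frobNorm {m n : ℕ} (A : Matrix (Fin m) (Fin n) ℝ) : ℝ :=
  Real.sqrt ((Aᵀ * A).trace)

noncomputable def specNorm {m n : ℕ} (A : Matrix (Fin m) (Fin n) ℝ) : ℝ :=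
  ‖(Matrix.toEuclideanLin A).toContinuousLinearMap‖

def headCols {m : ℕ} (r : ℕ) (h : r ≤ m) (A : Matrix (Fin m) (Fin m) ℝ) :
    Matrix (Fin m) (Fin r) ℝ :=
  A.submatrix id (Fin.castLE h)

def tailCols {m : ℕ} (r : ℕ) (h : r ≤ m) (A : Matrix (Fin m) (Fin m) ℝ) :
    Matrix (Fin m) (Fin (m - r)) ℝ :=
  A.submatrix id fun j => Fin.cast (Nat.add_sub_cancel' h) (Fin.natAdd r j)

/-!
Let `σ`, `τ` be the least positive eigenvalues of `H = XᴴD` and `YᴴD`, and `θ` the canonical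
angles between the ranges of `X` and `Y`. Bound the polar factors `X V₁ V₁ᴴ`, `Y U₁ U₁ᴴ` and the
free parts `X V₂ W V₂ᴴ`, `Y U₂ T U₂ᴴ` separately.

*Polar factors.* With the polar factor `Q = X V₁ V₁ᴴ` of `X XᴴD`, the number
`re tr ((X XᴴD)ᴴ (Q - Q'))` is at least `σ (r - re tr (Qᴴ Q'))` for every `Q' = Y U₁ U₁ᴴ`, since
`H` is at least `σ` on the range of `V₁` and `Xᴴ Q'` is a contraction. Adding the same inequality
with `X` and `Y` exchanged gives `(σ + τ) ‖Q - Q'‖² / 2` on one side and an inner product of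
`(Y Yᴴ - X Xᴴ) D` with `Q' - Q` on the other, where `‖Y Yᴴ - X Xᴴ‖ = √2 ‖sin θ‖`.

*Free parts.* By the orthogonal Procrustes problem, two orthonormal bases can be rotated to within
`√2` times the sine distance of their spans, so a good `W` exists once the angles between `V₂` and
`U₂` and between `X V₂` and `Y U₂` are small. They are, because `XᴴD` and `YᴴD` vanish on `V₂` and
`U₂` while one of them is at least `max σ τ` on the orthogonal complement.
-/

section Gram

variable {R l m n : Type*} [Semiring R] [StarRing R]

lemma conjTranspose_mul_self_mul_eq_one [Fintype l] [Fintype n] [DecidableEq l] [DecidableEq m]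
    {X : Matrix n l R} {Y : Matrix l m R} (hX : Xᴴ * X = 1) (hY : Yᴴ * Y = 1) :
    (X * Y)ᴴ * (X * Y) = 1 := by
  rw [conjTranspose_mul, Matrix.mul_assoc, ← Matrix.mul_assoc Xᴴ, hX, Matrix.one_mul, hY]

lemma conjTranspose_submatrix_mul_submatrix [Fintype m] [DecidableEq n] {a b : Type*}
    {V : Matrix m n R} (hV : Vᴴ * V = 1) (f : a → n) (g : b → n) :
    (V.submatrix id f)ᴴ * V.submatrix id g = (1 : Matrix n n R).submatrix f g := by
  rw [conjTranspose_submatrix, ← submatrix_mul _ _ _ _ _ Function.bijective_id, hV]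

lemma mul_diagonal_mul_conjTranspose_eq_add [Fintype l] [Fintype m] [Fintype n] [DecidableEq l]
    [DecidableEq m] [DecidableEq n] (e : l ⊕ m ≃ n) (V : Matrix n n R) (d : n → R) :
    V * diagonal d * Vᴴ =
      V.submatrix id (e ∘ Sum.inl) * diagonal (d ∘ e ∘ Sum.inl) *
          (V.submatrix id (e ∘ Sum.inl))ᴴ +
        V.submatrix id (e ∘ Sum.inr) * diagonal (d ∘ e ∘ Sum.inr) *
          (V.submatrix id (e ∘ Sum.inr))ᴴ := by
  ext i j
  rw [Matrix.add_apply, mul_apply, mul_apply, mul_apply, ← e.sum_comp, Fintype.sum_sum_type]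
  simp only [mul_diagonal]
  rfl

end Gram

section SpectralNorm

open scoped Matrix.Norms.L2Operator

/-- The spectral norm of a matrix over `ℝ` or `ℂ`. It gets a name of its own because `‖·‖` is used
for the Frobenius norm, and both norms occur in the same inequalities. -/
noncomputable def l2OpNorm {𝕜 m n : Type*} [RCLike 𝕜] [Fintype m] [Fintype n] [DecidableEq n]
    (A : Matrix m n 𝕜) : ℝ :=
  ‖A‖

variable {𝕜 l m n : Type*} [RCLike 𝕜] [Fintype l] [Fintype m] [Fintype n] [DecidableEq n]

lemma l2OpNorm_nonneg (A : Matrix m n 𝕜) : 0 ≤ l2OpNorm A :=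
  norm_nonneg A

lemma l2OpNorm_conjTranspose [DecidableEq m] (A : Matrix m n 𝕜) : l2OpNorm Aᴴ = l2OpNorm A :=
  l2_opNorm_conjTranspose A

lemma l2OpNorm_mul_le_one [DecidableEq m] {A : Matrix l m 𝕜} {B : Matrix m n 𝕜}
    (hA : l2OpNorm A ≤ 1) (hB : l2OpNorm B ≤ 1) : l2OpNorm (A * B) ≤ 1 :=
  (l2_opNorm_mul A B).trans (mul_le_one₀ hA (norm_nonneg B) hB)

lemma l2OpNorm_le_of_gram_eq {A : Matrix l n 𝕜} {B : Matrix m n 𝕜} (h : Aᴴ * A = Bᴴ * B) :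
    l2OpNorm A ≤ l2OpNorm B := by
  classical
  refine le_of_sq_le_sq ?_ (l2OpNorm_nonneg B)
  rw [sq, sq, l2OpNorm, l2OpNorm, ← l2_opNorm_conjTranspose_mul_self, h,
    l2_opNorm_conjTranspose_mul_self]

lemma l2OpNorm_le_one {Y : Matrix m n 𝕜} (hY : Yᴴ * Y = 1) : l2OpNorm Y ≤ 1 := by
  have hone : l2OpNorm (1 : Matrix n n 𝕜) ≤ 1 := by
    rw [l2OpNorm, cstar_norm_def, map_one]
    exact ContinuousLinearMap.norm_id_le
  refine (l2OpNorm_le_of_gram_eq ?_).trans hone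
  rw [hY, conjTranspose_one, Matrix.one_mul]

lemma norm_toLp_mulVec_le (A : Matrix m n 𝕜) (x : n → 𝕜) :
    ‖WithLp.toLp 2 (A *ᵥ x)‖ ≤ l2OpNorm A * ‖WithLp.toLp 2 x‖ :=
  l2_opNorm_mulVec A (WithLp.toLp 2 x)

end SpectralNorm

section PolarDecomposition

variable {𝕜 : Type*} [RCLike 𝕜]

lemma exists_linearIsometry_comp_eq_of_norm_eq {E V : Type*} [AddCommGroup E] [Module 𝕜 E]
    [NormedAddCommGroup V] [InnerProductSpace 𝕜 V] [FiniteDimensional 𝕜 V] {f g : E →ₗ[𝕜] V}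
    (h : ∀ x, ‖f x‖ = ‖g x‖) : ∃ L : V →ₗᵢ[𝕜] V, ∀ x, L (g x) = f x := by
  obtain ⟨t, ht⟩ := g.rangeRestrict.exists_rightInverse_of_surjective g.range_rangeRestrict
  have hgt : ∀ y, g (t y) = y := fun y => congrArg Subtype.val (LinearMap.congr_fun ht y)
  let L₀ : LinearMap.range g →ₗᵢ[𝕜] V :=
    ⟨f ∘ₗ t, fun y => by rw [LinearMap.comp_apply, h, hgt, Submodule.coe_norm]⟩
  refine ⟨L₀.extend, fun x => ?_⟩
  have hker : f (t (g.rangeRestrict x) - x) = 0 := by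
    rw [← norm_eq_zero, h, map_sub, hgt, LinearMap.codRestrict_apply, sub_self, norm_zero]
  calc L₀.extend (g x) = L₀ (g.rangeRestrict x) := L₀.extend_apply (g.rangeRestrict x)
    _ = f x := sub_eq_zero.mp (by rwa [map_sub] at hker)

variable {m n : Type*} [Fintype m]

lemma norm_toEuclideanLin_sq [Fintype n] [DecidableEq n] (A : Matrix m n 𝕜)
    (x : EuclideanSpace 𝕜 n) :
    ‖toEuclideanLin A x‖ ^ 2 = RCLike.re (inner 𝕜 x (toEuclideanLin (Aᴴ * A) x)) := by
  classical
  rw [toLpLin_mul_same, LinearMap.comp_apply, toEuclideanLin_conjTranspose_eq_adjoint,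
    LinearMap.adjoint_inner_right, inner_self_eq_norm_sq]

lemma exists_isometry_mul_eq_of_gram_eq [Finite n] [DecidableEq m] {A B : Matrix m n 𝕜}
    (h : Aᴴ * A = Bᴴ * B) : ∃ U : Matrix m m 𝕜, Uᴴ * U = 1 ∧ U * B = A := by
  classical
  have := Fintype.ofFinite n
  have hnorm : ∀ x, ‖toEuclideanLin A x‖ = ‖toEuclideanLin B x‖ := fun x => by
    rw [← pow_left_inj₀ (norm_nonneg _) (norm_nonneg _) two_ne_zero, norm_toEuclideanLin_sq, h,
      norm_toEuclideanLin_sq]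
  obtain ⟨L, hL⟩ := exists_linearIsometry_comp_eq_of_norm_eq hnorm
  refine ⟨toEuclideanLin.symm L.toLinearMap, ?_, ?_⟩
  · apply toEuclideanLin.injective
    rw [toLpLin_mul_same, toEuclideanLin_conjTranspose_eq_adjoint, LinearEquiv.apply_symm_apply,
      toLpLin_one]
    ext1 x
    refine ext_inner_left 𝕜 fun y => ?_
    rw [LinearMap.comp_apply, LinearMap.adjoint_inner_right]
    exact L.inner_map_map y x
  · apply toEuclideanLin.injective
    rw [toLpLin_mul_same, LinearEquiv.apply_symm_apply]
    exact LinearMap.ext hL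

open scoped ComplexOrder MatrixOrder Matrix.Norms.L2Operator in
lemma exists_isometry_mul_posSemidef_eq [DecidableEq m] (A : Matrix m m 𝕜) :
    ∃ U P : Matrix m m 𝕜, Uᴴ * U = 1 ∧ P.PosSemidef ∧ U * P = A := by
  have hA : 0 ≤ Aᴴ * A := (posSemidef_conjTranspose_mul_self A).nonneg
  have hP : (CFC.sqrt (Aᴴ * A)).PosSemidef := (CFC.sqrt_nonneg _).posSemidef
  obtain ⟨U, hU, hUP⟩ := exists_isometry_mul_eq_of_gram_eq (A := A) (B := CFC.sqrt (Aᴴ * A))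
    (by rw [hP.isHermitian.eq, CFC.sqrt_mul_sqrt_self _ hA])
  exact ⟨U, _, hU, hP, hUP⟩

end PolarDecomposition

section Frobenius

open RCLike
open scoped ComplexOrder Matrix.Norms.Frobenius

variable {𝕜 l m n : Type*} [RCLike 𝕜] [Fintype l] [Fintype m] [Fintype n]

lemma norm_toLp_vec (A : Matrix m n 𝕜) : ‖WithLp.toLp 2 A.vec‖ = ‖A‖ := by
  rw [EuclideanSpace.norm_eq, frobenius_norm_def, Real.sqrt_eq_rpow, Fintype.sum_prod_type_right]
  simp [vec]

lemma inner_toLp_vec (A B : Matrix m n 𝕜) :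
    inner 𝕜 (WithLp.toLp 2 A.vec) (WithLp.toLp 2 B.vec) = (Aᴴ * B).trace := by
  rw [EuclideanSpace.inner_toLp_toLp, dotProduct_comm, star_vec_dotProduct_vec]

lemma norm_sq_eq_re_trace (A : Matrix m n 𝕜) : ‖A‖ ^ 2 = re (Aᴴ * A).trace := by
  rw [← norm_toLp_vec, ← inner_toLp_vec, inner_self_eq_norm_sq]

lemma re_trace_conjTranspose_mul_comm (A B : Matrix m n 𝕜) :
    re (Aᴴ * B).trace = re (Bᴴ * A).trace := by
  rw [← inner_toLp_vec, ← inner_toLp_vec, inner_re_symm]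

lemma re_trace_conjTranspose_mul_le (A B : Matrix m n 𝕜) : re (Aᴴ * B).trace ≤ ‖A‖ * ‖B‖ := by
  rw [← inner_toLp_vec, ← norm_toLp_vec, ← norm_toLp_vec]
  exact re_inner_le_norm _ _

lemma norm_sub_sq_eq_re_trace (A B : Matrix m n 𝕜) :
    ‖A - B‖ ^ 2 = ‖A‖ ^ 2 - 2 * re (Aᴴ * B).trace + ‖B‖ ^ 2 := by
  rw [← inner_toLp_vec, ← norm_toLp_vec, ← norm_toLp_vec, ← norm_toLp_vec, ← norm_sub_sq]
  rfl

lemma norm_mul_of_conjTranspose_mul_self [DecidableEq m] {Y : Matrix l m 𝕜} (hY : Yᴴ * Y = 1)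
    (A : Matrix m n 𝕜) : ‖Y * A‖ = ‖A‖ := by
  rw [← pow_left_inj₀ (norm_nonneg _) (norm_nonneg _) two_ne_zero, norm_sq_eq_re_trace,
    norm_sq_eq_re_trace, conjTranspose_mul, Matrix.mul_assoc, ← Matrix.mul_assoc Yᴴ, hY,
    Matrix.one_mul]

lemma norm_mul_conjTranspose_of_conjTranspose_mul_self [DecidableEq m] {Y : Matrix l m 𝕜}
    (hY : Yᴴ * Y = 1) (A : Matrix n m 𝕜) : ‖A * Yᴴ‖ = ‖A‖ := by
  rw [← frobenius_norm_conjTranspose, conjTranspose_mul, conjTranspose_conjTranspose,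
    norm_mul_of_conjTranspose_mul_self hY, frobenius_norm_conjTranspose]

lemma norm_sq_of_conjTranspose_mul_self [DecidableEq m] {Y : Matrix l m 𝕜} (hY : Yᴴ * Y = 1) :
    ‖Y‖ ^ 2 = Fintype.card m := by
  simp [norm_sq_eq_re_trace, hY]

lemma norm_sq_eq_sum_norm_toLp_col (A : Matrix m n 𝕜) :
    ‖A‖ ^ 2 = ∑ j, ‖WithLp.toLp 2 (A.col j)‖ ^ 2 := by
  rw [← norm_toLp_vec, EuclideanSpace.norm_sq_eq, Fintype.sum_prod_type]
  simp [EuclideanSpace.norm_sq_eq, vec]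

lemma norm_mul_le_l2OpNorm_mul_norm [DecidableEq m] (D : Matrix l m 𝕜) (A : Matrix m n 𝕜) :
    ‖D * A‖ ≤ l2OpNorm D * ‖A‖ := by
  refine le_of_sq_le_sq ?_ (mul_nonneg (l2OpNorm_nonneg D) (norm_nonneg A))
  rw [mul_pow, norm_sq_eq_sum_norm_toLp_col, norm_sq_eq_sum_norm_toLp_col, Finset.mul_sum]
  refine Finset.sum_le_sum fun j _ => ?_
  rw [← mul_pow]
  exact pow_le_pow_left₀ (norm_nonneg _) (norm_toLp_mulVec_le D (A.col j)) 2

lemma norm_mul_le_norm_mul_l2OpNorm [DecidableEq m] (A : Matrix n l 𝕜) (D : Matrix l m 𝕜) :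
    ‖A * D‖ ≤ ‖A‖ * l2OpNorm D := by
  classical
  rw [← frobenius_norm_conjTranspose, conjTranspose_mul, ← frobenius_norm_conjTranspose A,
    ← l2OpNorm_conjTranspose D, mul_comm ‖_‖]
  exact norm_mul_le_l2OpNorm_mul_norm Dᴴ Aᴴ

lemma norm_mul_le_norm_of_l2OpNorm_le_one [DecidableEq m] (A : Matrix n l 𝕜) {C : Matrix l m 𝕜}
    (hC : l2OpNorm C ≤ 1) : ‖A * C‖ ≤ ‖A‖ :=
  (norm_mul_le_norm_mul_l2OpNorm A C).trans (mul_le_of_le_one_right (norm_nonneg A) hC)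

open scoped MatrixOrder Matrix.Norms.L2Operator in
lemma exists_eq_conjTranspose_mul_self {M : Matrix n n 𝕜} (hM : M.PosSemidef) :
    ∃ S : Matrix n n 𝕜, M = Sᴴ * S := by
  classical
  exact CStarAlgebra.nonneg_iff_eq_star_mul_self.mp hM.nonneg

lemma re_trace_mul_le_of_posSemidef [DecidableEq n] {M C : Matrix n n 𝕜} (hM : M.PosSemidef)
    (hC : l2OpNorm C ≤ 1) : re (M * C).trace ≤ re M.trace := by
  obtain ⟨S, rfl⟩ := exists_eq_conjTranspose_mul_self hM
  calc re (Sᴴ * S * C).trace = re (Sᴴ * (S * C)).trace := by rw [Matrix.mul_assoc]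
    _ ≤ ‖S‖ * ‖S * C‖ := re_trace_conjTranspose_mul_le S (S * C)
    _ ≤ ‖S‖ * ‖S‖ := by gcongr; exact norm_mul_le_norm_of_l2OpNorm_le_one S hC
    _ = re (Sᴴ * S).trace := by rw [← sq, norm_sq_eq_re_trace]

lemma exists_isometry_norm_sq_le_re_trace [DecidableEq n] {G : Matrix n n 𝕜}
    (hG : l2OpNorm G ≤ 1) :
    ∃ Q : Matrix n n 𝕜, Qᴴ * Q = 1 ∧ ‖G‖ ^ 2 ≤ re (Qᴴ * G).trace := by
  obtain ⟨Q, P, hQ, hP, rfl⟩ := exists_isometry_mul_posSemidef_eq G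
  have hgram : Pᴴ * P = (Q * P)ᴴ * (Q * P) := by
    rw [conjTranspose_mul, Matrix.mul_assoc, ← Matrix.mul_assoc Qᴴ, hQ, Matrix.one_mul]
  refine ⟨Q, hQ, ?_⟩
  calc ‖Q * P‖ ^ 2 = re (P * P).trace := by
        rw [norm_mul_of_conjTranspose_mul_self hQ, norm_sq_eq_re_trace, hP.isHermitian.eq]
    _ ≤ re P.trace := re_trace_mul_le_of_posSemidef hP ((l2OpNorm_le_of_gram_eq hgram).trans hG)
    _ = re (Qᴴ * (Q * P)).trace := by rw [← Matrix.mul_assoc, hQ, Matrix.one_mul]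

/-- The Frobenius norm of the sines of the canonical angles between the column spaces of `X` and
`Y`, when the columns of both are orthonormal. -/
noncomputable def sinTheta (X Y : Matrix n m 𝕜) : ℝ :=
  √(Fintype.card m - ‖Xᴴ * Y‖ ^ 2)

lemma sinTheta_nonneg (X Y : Matrix n m 𝕜) : 0 ≤ sinTheta X Y :=
  Real.sqrt_nonneg _

lemma sinTheta_comm (X Y : Matrix n m 𝕜) : sinTheta X Y = sinTheta Y X := by
  rw [sinTheta, sinTheta, ← frobenius_norm_conjTranspose, conjTranspose_mul,
    conjTranspose_conjTranspose]

section Isometry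

variable [DecidableEq m]

lemma norm_mul_mul_conjTranspose_sq [DecidableEq l] {X : Matrix n l 𝕜} {V : Matrix l m 𝕜}
    (hX : Xᴴ * X = 1) (hV : Vᴴ * V = 1) : ‖X * (V * Vᴴ)‖ ^ 2 = Fintype.card m := by
  rw [norm_mul_of_conjTranspose_mul_self hX, norm_mul_of_conjTranspose_mul_self hV,
    frobenius_norm_conjTranspose, norm_sq_of_conjTranspose_mul_self hV]

lemma norm_sub_mul_conjTranspose_mul_sq {X Y : Matrix n m 𝕜} (hX : Xᴴ * X = 1) (hY : Yᴴ * Y = 1) :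
    ‖Y - X * (Xᴴ * Y)‖ ^ 2 = Fintype.card m - ‖Xᴴ * Y‖ ^ 2 := by
  have hcross : re (Yᴴ * (X * (Xᴴ * Y))).trace = ‖Xᴴ * Y‖ ^ 2 := by
    rw [norm_sq_eq_re_trace, conjTranspose_mul, conjTranspose_conjTranspose, Matrix.mul_assoc]
  rw [norm_sub_sq_eq_re_trace, hcross, norm_mul_of_conjTranspose_mul_self hX,
    norm_sq_of_conjTranspose_mul_self hY]
  ring

lemma norm_sub_mul_conjTranspose_mul {X Y : Matrix n m 𝕜} (hX : Xᴴ * X = 1) (hY : Yᴴ * Y = 1) :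
    ‖Y - X * (Xᴴ * Y)‖ = sinTheta X Y := by
  rw [sinTheta, ← norm_sub_mul_conjTranspose_mul_sq hX hY, Real.sqrt_sq (norm_nonneg _)]

lemma sinTheta_sq {X Y : Matrix n m 𝕜} (hX : Xᴴ * X = 1) (hY : Yᴴ * Y = 1) :
    sinTheta X Y ^ 2 = Fintype.card m - ‖Xᴴ * Y‖ ^ 2 := by
  rw [← norm_sub_mul_conjTranspose_mul hX hY, norm_sub_mul_conjTranspose_mul_sq hX hY]

lemma norm_mul_conjTranspose_sub {X Y : Matrix n m 𝕜} (hX : Xᴴ * X = 1) (hY : Yᴴ * Y = 1) :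
    ‖X * Xᴴ - Y * Yᴴ‖ = √2 * sinTheta X Y := by
  have hcross : re ((X * Xᴴ)ᴴ * (Y * Yᴴ)).trace = ‖Xᴴ * Y‖ ^ 2 := by
    rw [norm_sq_eq_re_trace, conjTranspose_mul, conjTranspose_conjTranspose, conjTranspose_mul,
      conjTranspose_conjTranspose, Matrix.mul_assoc Yᴴ, trace_mul_comm Yᴴ]
    simp only [Matrix.mul_assoc]
  rw [← pow_left_inj₀ (norm_nonneg _) (by positivity [sinTheta_nonneg X Y]) two_ne_zero, mul_pow,
    Real.sq_sqrt zero_le_two, sinTheta_sq hX hY, norm_sub_sq_eq_re_trace, hcross,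
    norm_mul_of_conjTranspose_mul_self hX, norm_mul_of_conjTranspose_mul_self hY,
    frobenius_norm_conjTranspose, frobenius_norm_conjTranspose,
    norm_sq_of_conjTranspose_mul_self hX, norm_sq_of_conjTranspose_mul_self hY]
  ring

lemma exists_isometry_norm_sub_mul_le {X Y : Matrix n m 𝕜} (hX : Xᴴ * X = 1) (hY : Yᴴ * Y = 1) :
    ∃ Q : Matrix m m 𝕜, Qᴴ * Q = 1 ∧ ‖Y - X * Q‖ ≤ √2 * sinTheta X Y := by
  classical
  have hG : l2OpNorm (Xᴴ * Y) ≤ 1 :=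
    l2OpNorm_mul_le_one (l2OpNorm_conjTranspose X ▸ l2OpNorm_le_one hX) (l2OpNorm_le_one hY)
  obtain ⟨Q, hQ, hQG⟩ := exists_isometry_norm_sq_le_re_trace hG
  have hcross : re (Yᴴ * (X * Q)).trace = re (Qᴴ * (Xᴴ * Y)).trace := by
    rw [re_trace_conjTranspose_mul_comm, conjTranspose_mul, Matrix.mul_assoc]
  refine ⟨Q, hQ, le_of_sq_le_sq ?_ (mul_nonneg (Real.sqrt_nonneg 2) (sinTheta_nonneg X Y))⟩
  rw [mul_pow, Real.sq_sqrt zero_le_two, sinTheta_sq hX hY, norm_sub_sq_eq_re_trace, hcross,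
    norm_sq_of_conjTranspose_mul_self hY,
    norm_sq_of_conjTranspose_mul_self (conjTranspose_mul_self_mul_eq_one hX hQ)]
  linarith

lemma exists_isometry_norm_mul_mul_sub_le {X Y : Matrix n m 𝕜} {V U : Matrix l m 𝕜}
    (hX : Xᴴ * X = 1) (hY : Yᴴ * Y = 1) (hV : Vᴴ * V = 1) (hU : Uᴴ * U = 1)
    {T : Matrix m m 𝕜} (hT : Tᴴ * T = 1) :
    ∃ W : Matrix m m 𝕜, Wᴴ * W = 1 ∧
      ‖Y * T * Uᴴ - X * W * Vᴴ‖ ≤ √2 * (sinTheta X Y + sinTheta V U) := by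
  obtain ⟨P, hP, hPXY⟩ := exists_isometry_norm_sub_mul_le hX hY
  obtain ⟨Q, hQ, hQVU⟩ := exists_isometry_norm_sub_mul_le hV hU
  have hT' : Tᴴᴴ * Tᴴ = 1 := by rw [conjTranspose_conjTranspose, mul_eq_one_comm.mp hT]
  have hQ' : Qᴴᴴ * Qᴴ = 1 := by rw [conjTranspose_conjTranspose, mul_eq_one_comm.mp hQ]
  have hPT : (P * T)ᴴ * (P * T) = 1 := conjTranspose_mul_self_mul_eq_one hP hT
  refine ⟨P * T * Qᴴ, conjTranspose_mul_self_mul_eq_one hPT hQ', ?_⟩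
  calc ‖Y * T * Uᴴ - X * (P * T * Qᴴ) * Vᴴ‖
      = ‖(Y - X * P) * (U * Tᴴ)ᴴ + X * (P * T) * (U - V * Q)ᴴ‖ := by
        simp only [conjTranspose_mul, conjTranspose_sub, conjTranspose_conjTranspose,
          Matrix.sub_mul, Matrix.mul_sub, Matrix.mul_assoc, sub_add_sub_cancel]
    _ ≤ ‖(Y - X * P) * (U * Tᴴ)ᴴ‖ + ‖X * (P * T) * (U - V * Q)ᴴ‖ := norm_add_le _ _
    _ = ‖Y - X * P‖ + ‖U - V * Q‖ := by
        rw [norm_mul_conjTranspose_of_conjTranspose_mul_self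
            (conjTranspose_mul_self_mul_eq_one hU hT'),
          norm_mul_of_conjTranspose_mul_self (conjTranspose_mul_self_mul_eq_one hX hPT),
          frobenius_norm_conjTranspose]
    _ ≤ √2 * (sinTheta X Y + sinTheta V U) := by linarith

end Isometry

/-- The spectral decomposition of `H` blocked into range and kernel, without a choice of eigenbasis:
the columns of `V₁` and `V₂` together form an orthonormal basis, `H` vanishes on those of `V₂`, and
`H` is at least `σ` on the span of those of `V₁`. In the application `σ` is the least positive
eigenvalue of `H`. -/
structure SpectralSplitting [DecidableEq l] [DecidableEq m] [DecidableEq n]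
    (H : Matrix n n 𝕜) (V₁ : Matrix n l 𝕜) (V₂ : Matrix n m 𝕜) (σ : ℝ) : Prop where
  left_isometry : V₁ᴴ * V₁ = 1
  right_isometry : V₂ᴴ * V₂ = 1
  add_eq_one : V₁ * V₁ᴴ + V₂ * V₂ᴴ = 1
  mul_right_eq_zero : H * V₂ = 0
  posSemidef_sub : (H - (σ : 𝕜) • (V₁ * V₁ᴴ)).PosSemidef

namespace SpectralSplitting

variable {p : Type*} [Fintype p] [DecidableEq l] [DecidableEq m] [DecidableEq n]

section Block

variable {H : Matrix n n 𝕜} {V₁ : Matrix n l 𝕜} {V₂ : Matrix n m 𝕜} {σ : ℝ}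

lemma isHermitian (h : SpectralSplitting H V₁ V₂ σ) : H.IsHermitian := by
  have hσ : ((σ : 𝕜) • (V₁ * V₁ᴴ)).IsHermitian := by
    rw [IsHermitian, conjTranspose_smul, star_def, conj_ofReal,
      (isHermitian_mul_conjTranspose_self V₁).eq]
  simpa only [sub_add_cancel] using h.posSemidef_sub.isHermitian.add hσ

lemma mul_left_mul_conjTranspose (h : SpectralSplitting H V₁ V₂ σ) : H * (V₁ * V₁ᴴ) = H := by
  rw [eq_sub_of_add_eq h.add_eq_one, Matrix.mul_sub, Matrix.mul_one, ← Matrix.mul_assoc,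
    h.mul_right_eq_zero, Matrix.zero_mul, sub_zero]

lemma left_mul_conjTranspose_mul (h : SpectralSplitting H V₁ V₂ σ) : V₁ * V₁ᴴ * H = H := by
  have hstar := congrArg conjTranspose h.mul_left_mul_conjTranspose
  rwa [conjTranspose_mul, (isHermitian_mul_conjTranspose_self V₁).eq, h.isHermitian.eq] at hstar

lemma mul_norm_conjTranspose_mul_le (h : SpectralSplitting H V₁ V₂ σ) (B : Matrix n p 𝕜) :
    σ * ‖V₁ᴴ * B‖ ≤ ‖H * B‖ := by
  have hgap : 0 ≤ re (Bᴴ * (H - (σ : 𝕜) • (V₁ * V₁ᴴ)) * B).trace :=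
    (RCLike.nonneg_iff.mp (h.posSemidef_sub.conjTranspose_mul_mul_same B).trace_nonneg).1
  have hleft : re (Bᴴ * ((σ : 𝕜) • (V₁ * V₁ᴴ)) * B).trace = σ * ‖V₁ᴴ * B‖ ^ 2 := by
    rw [norm_sq_eq_re_trace, Matrix.mul_smul, Matrix.smul_mul, trace_smul, smul_eq_mul,
      re_ofReal_mul, conjTranspose_mul, conjTranspose_conjTranspose]
    simp only [Matrix.mul_assoc]
  have hright : re (Bᴴ * H * B).trace ≤ ‖V₁ᴴ * B‖ * ‖H * B‖ := by
    calc re (Bᴴ * H * B).trace = re ((V₁ᴴ * B)ᴴ * (V₁ᴴ * (H * B))).trace := by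
          rw [conjTranspose_mul, conjTranspose_conjTranspose]
          conv_lhs => rw [← h.left_mul_conjTranspose_mul]
          simp only [Matrix.mul_assoc]
      _ ≤ ‖V₁ᴴ * B‖ * ‖V₁ᴴ * (H * B)‖ := re_trace_conjTranspose_mul_le _ _
      _ = ‖V₁ᴴ * B‖ * ‖H * B‖ := by
          rw [← norm_mul_of_conjTranspose_mul_self h.left_isometry (V₁ᴴ * (H * B)),
            ← Matrix.mul_assoc, ← Matrix.mul_assoc, h.left_mul_conjTranspose_mul]
  rw [Matrix.mul_sub, Matrix.sub_mul, trace_sub, map_sub, hleft] at hgap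
  rcases (norm_nonneg (V₁ᴴ * B)).eq_or_lt with hzero | hpos
  · rw [← hzero, mul_zero]
    exact norm_nonneg _
  · exact le_of_mul_le_mul_left (by linarith) hpos

lemma mul_sub_re_trace_le (h : SpectralSplitting H V₁ V₂ σ) {C : Matrix n n 𝕜}
    (hC : l2OpNorm C ≤ 1) :
    σ * (Fintype.card l - re (V₁ * V₁ᴴ * C).trace) ≤ re H.trace - re (H * C).trace := by
  have hcard : re (V₁ * V₁ᴴ).trace = Fintype.card l := by
    rw [trace_mul_comm, h.left_isometry, trace_one, natCast_re]
  have hle := re_trace_mul_le_of_posSemidef h.posSemidef_sub hC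
  simp only [Matrix.sub_mul, Matrix.smul_mul, trace_sub, trace_smul, smul_eq_mul, map_sub,
    re_ofReal_mul, hcard] at hle
  linarith

lemma sinTheta_right (h : SpectralSplitting H V₁ V₂ σ) {U : Matrix n m 𝕜} (hU : Uᴴ * U = 1) :
    sinTheta V₂ U = ‖V₁ᴴ * U‖ := by
  rw [← norm_sub_mul_conjTranspose_mul h.right_isometry hU,
    ← norm_mul_of_conjTranspose_mul_self h.left_isometry, ← Matrix.mul_assoc, ← Matrix.mul_assoc,
    eq_sub_of_add_eq h.add_eq_one, Matrix.sub_mul, Matrix.one_mul]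

end Block

section Pair

variable {D X Y : Matrix p n 𝕜} {V₁ U₁ : Matrix n l 𝕜} {V₂ U₂ : Matrix n m 𝕜} {σ τ : ℝ}

lemma mul_sinTheta_right_le (hX : Xᴴ * X = 1) (hY : Yᴴ * Y = 1)
    (h : SpectralSplitting (Xᴴ * D) V₁ V₂ σ) (h' : SpectralSplitting (Yᴴ * D) U₁ U₂ τ) :
    σ * sinTheta V₂ U₂ ≤ l2OpNorm D * sinTheta X Y := by
  have hker : (X - Y * (Yᴴ * X))ᴴ * D * U₂ = Xᴴ * D * U₂ := by
    have hzero : (Y * (Yᴴ * X))ᴴ * D * U₂ = 0 := by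
      rw [conjTranspose_mul, Matrix.mul_assoc, Matrix.mul_assoc, ← Matrix.mul_assoc Yᴴ,
        h'.mul_right_eq_zero, Matrix.mul_zero]
    rw [conjTranspose_sub, Matrix.sub_mul, Matrix.sub_mul, hzero, sub_zero]
  calc σ * sinTheta V₂ U₂ = σ * ‖V₁ᴴ * U₂‖ := by rw [h.sinTheta_right h'.right_isometry]
    _ ≤ ‖(X - Y * (Yᴴ * X))ᴴ * D * U₂‖ := by
        rw [hker]
        exact h.mul_norm_conjTranspose_mul_le U₂
    _ ≤ ‖(X - Y * (Yᴴ * X))ᴴ * D‖ :=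
        norm_mul_le_norm_of_l2OpNorm_le_one _ (l2OpNorm_le_one h'.right_isometry)
    _ ≤ ‖(X - Y * (Yᴴ * X))ᴴ‖ * l2OpNorm D := norm_mul_le_norm_mul_l2OpNorm _ D
    _ = l2OpNorm D * sinTheta X Y := by
        rw [frobenius_norm_conjTranspose, norm_sub_mul_conjTranspose_mul hY hX, sinTheta_comm,
          mul_comm]

lemma mul_norm_left_conjTranspose_mul_le (hX : Xᴴ * X = 1) (hY : Yᴴ * Y = 1)
    (h : SpectralSplitting (Xᴴ * D) V₁ V₂ σ) (h' : SpectralSplitting (Yᴴ * D) U₁ U₂ τ) :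
    σ * ‖V₁ᴴ * (Xᴴ * Y * U₂)‖ ≤ l2OpNorm D * sinTheta X Y := by
  classical
  have hker : Xᴴ * D * (Xᴴ * Y * U₂) = -(Dᴴ * ((Y - X * (Xᴴ * Y)) * U₂)) := by
    have hHX : Xᴴ * D = Dᴴ * X := by
      rw [← h.isHermitian.eq, conjTranspose_mul, conjTranspose_conjTranspose]
    have hHY : Dᴴ * (Y * U₂) = 0 := by
      rw [← h'.mul_right_eq_zero, ← h'.isHermitian.eq, conjTranspose_mul,
        conjTranspose_conjTranspose, Matrix.mul_assoc]
    rw [Matrix.sub_mul, Matrix.mul_sub, hHY, zero_sub, neg_neg, hHX]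
    simp only [Matrix.mul_assoc]
  calc σ * ‖V₁ᴴ * (Xᴴ * Y * U₂)‖ ≤ ‖Dᴴ * ((Y - X * (Xᴴ * Y)) * U₂)‖ := by
        rw [← norm_neg (Dᴴ * _), ← hker]
        exact h.mul_norm_conjTranspose_mul_le _
    _ ≤ l2OpNorm Dᴴ * ‖(Y - X * (Xᴴ * Y)) * U₂‖ := norm_mul_le_l2OpNorm_mul_norm _ _
    _ ≤ l2OpNorm D * sinTheta X Y := by
        rw [l2OpNorm_conjTranspose, ← norm_sub_mul_conjTranspose_mul hX hY]
        gcongr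
        · exact l2OpNorm_nonneg D
        · exact norm_mul_le_norm_of_l2OpNorm_le_one _ (l2OpNorm_le_one h'.right_isometry)

lemma mul_sinTheta_mul_right_le (hX : Xᴴ * X = 1) (hY : Yᴴ * Y = 1)
    (h : SpectralSplitting (Xᴴ * D) V₁ V₂ σ) (h' : SpectralSplitting (Yᴴ * D) U₁ U₂ τ)
    (hσ : 0 ≤ σ) : σ * sinTheta (X * V₂) (Y * U₂) ≤ (σ + l2OpNorm D) * sinTheta X Y := by
  have hsplit : Y * U₂ - X * V₂ * ((X * V₂)ᴴ * (Y * U₂)) =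
      (Y - X * (Xᴴ * Y)) * U₂ + X * (V₁ * (V₁ᴴ * (Xᴴ * Y * U₂))) := by
    rw [← Matrix.mul_assoc V₁, eq_sub_of_add_eq h.add_eq_one, conjTranspose_mul]
    simp only [Matrix.sub_mul, Matrix.mul_sub, Matrix.one_mul, Matrix.mul_assoc,
      sub_add_sub_cancel]
  have hle : sinTheta (X * V₂) (Y * U₂) ≤ sinTheta X Y + ‖V₁ᴴ * (Xᴴ * Y * U₂)‖ := by
    rw [← norm_sub_mul_conjTranspose_mul
        (conjTranspose_mul_self_mul_eq_one hX h.right_isometry)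
        (conjTranspose_mul_self_mul_eq_one hY h'.right_isometry),
      hsplit, ← norm_sub_mul_conjTranspose_mul hX hY]
    refine (norm_add_le _ _).trans (add_le_add ?_ ?_)
    · exact norm_mul_le_norm_of_l2OpNorm_le_one _ (l2OpNorm_le_one h'.right_isometry)
    · rw [norm_mul_of_conjTranspose_mul_self hX, norm_mul_of_conjTranspose_mul_self h.left_isometry]
  calc σ * sinTheta (X * V₂) (Y * U₂)
      ≤ σ * sinTheta X Y + σ * ‖V₁ᴴ * (Xᴴ * Y * U₂)‖ := by
        rw [← mul_add]
        gcongr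
    _ ≤ (σ + l2OpNorm D) * sinTheta X Y := by
        linarith [h.mul_norm_left_conjTranspose_mul_le hX hY h']

lemma max_mul_sinTheta_add_le (hX : Xᴴ * X = 1) (hY : Yᴴ * Y = 1)
    (h : SpectralSplitting (Xᴴ * D) V₁ V₂ σ) (h' : SpectralSplitting (Yᴴ * D) U₁ U₂ τ)
    (hmax : 0 ≤ max σ τ) :
    max σ τ * (sinTheta (X * V₂) (Y * U₂) + sinTheta V₂ U₂) ≤
      (max σ τ + 2 * l2OpNorm D) * sinTheta X Y := by
  rcases max_choice σ τ with hσ | hτ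
  · rw [hσ] at hmax ⊢
    linarith [h.mul_sinTheta_mul_right_le hX hY h' hmax, h.mul_sinTheta_right_le hX hY h']
  · rw [hτ] at hmax ⊢
    rw [sinTheta_comm (X * V₂), sinTheta_comm V₂, sinTheta_comm X]
    linarith [h'.mul_sinTheta_mul_right_le hY hX h hmax, h'.mul_sinTheta_right_le hY hX h]

lemma exists_isometry_norm_right_sub_le (hX : Xᴴ * X = 1) (hY : Yᴴ * Y = 1)
    (h : SpectralSplitting (Xᴴ * D) V₁ V₂ σ) (h' : SpectralSplitting (Yᴴ * D) U₁ U₂ τ)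
    (hmax : 0 < max σ τ) {T : Matrix m m 𝕜} (hT : Tᴴ * T = 1) :
    ∃ W : Matrix m m 𝕜, Wᴴ * W = 1 ∧
      ‖Y * U₂ * T * U₂ᴴ - X * V₂ * W * V₂ᴴ‖ ≤
        (√2 + 2 * √2 * l2OpNorm D / max σ τ) * sinTheta X Y := by
  obtain ⟨W, hW, hWle⟩ := exists_isometry_norm_mul_mul_sub_le
    (conjTranspose_mul_self_mul_eq_one hX h.right_isometry)
    (conjTranspose_mul_self_mul_eq_one hY h'.right_isometry) h.right_isometry h'.right_isometry hT
  refine ⟨W, hW, hWle.trans ?_⟩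
  calc √2 * (sinTheta (X * V₂) (Y * U₂) + sinTheta V₂ U₂)
      ≤ √2 * ((max σ τ + 2 * l2OpNorm D) * sinTheta X Y / max σ τ) := by
        gcongr
        rw [le_div_iff₀' hmax]
        exact h.max_mul_sinTheta_add_le hX hY h' hmax.le
    _ = (√2 + 2 * √2 * l2OpNorm D / max σ τ) * sinTheta X Y := by field_simp

lemma mul_sub_re_trace_polar_le (hX : Xᴴ * X = 1) (hY : Yᴴ * Y = 1) (hU₁ : U₁ᴴ * U₁ = 1)
    (h : SpectralSplitting (Xᴴ * D) V₁ V₂ σ) :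
    σ * (Fintype.card l - re ((X * (V₁ * V₁ᴴ))ᴴ * (Y * (U₁ * U₁ᴴ))).trace) ≤
      re ((X * Xᴴ * D)ᴴ * (X * (V₁ * V₁ᴴ) - Y * (U₁ * U₁ᴴ))).trace := by
  classical
  have hC : l2OpNorm (Xᴴ * (Y * (U₁ * U₁ᴴ))) ≤ 1 :=
    l2OpNorm_mul_le_one (l2OpNorm_conjTranspose X ▸ l2OpNorm_le_one hX) <|
      l2OpNorm_mul_le_one (l2OpNorm_le_one hY) <|
        l2OpNorm_mul_le_one (l2OpNorm_le_one hU₁)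
          (l2OpNorm_conjTranspose U₁ ▸ l2OpNorm_le_one hU₁)
  have hadj : (X * Xᴴ * D)ᴴ = Xᴴ * D * Xᴴ := by
    rw [Matrix.mul_assoc, conjTranspose_mul, h.isHermitian.eq]
  have hQ : Xᴴ * D * Xᴴ * (X * (V₁ * V₁ᴴ)) = Xᴴ * D := by
    rw [Matrix.mul_assoc _ Xᴴ, ← Matrix.mul_assoc Xᴴ X, hX, Matrix.one_mul,
      h.mul_left_mul_conjTranspose]
  rw [conjTranspose_mul, (isHermitian_mul_conjTranspose_self V₁).eq, Matrix.mul_assoc _ Xᴴ, hadj,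
    Matrix.mul_sub, hQ, trace_sub, map_sub, Matrix.mul_assoc (Xᴴ * D)]
  exact h.mul_sub_re_trace_le hC

lemma add_mul_card_sub_re_trace_polar_le (hX : Xᴴ * X = 1) (hY : Yᴴ * Y = 1)
    (h : SpectralSplitting (Xᴴ * D) V₁ V₂ σ) (h' : SpectralSplitting (Yᴴ * D) U₁ U₂ τ) :
    (σ + τ) * (Fintype.card l - re ((Y * (U₁ * U₁ᴴ))ᴴ * (X * (V₁ * V₁ᴴ))).trace) ≤
      √2 * sinTheta X Y * l2OpNorm D * ‖Y * (U₁ * U₁ᴴ) - X * (V₁ * V₁ᴴ)‖ := by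
  have hσ := h.mul_sub_re_trace_polar_le hX hY h'.left_isometry
  have hτ := h'.mul_sub_re_trace_polar_le hY hX h.left_isometry
  rw [re_trace_conjTranspose_mul_comm] at hσ
  generalize X * (V₁ * V₁ᴴ) = P at *
  generalize Y * (U₁ * U₁ᴴ) = Q at *
  have hproj : ‖(Y * Yᴴ - X * Xᴴ) * D‖ ≤ √2 * sinTheta X Y * l2OpNorm D := by
    rw [sinTheta_comm, ← norm_mul_conjTranspose_sub hY hX]
    exact norm_mul_le_norm_mul_l2OpNorm _ D
  calc (σ + τ) * (Fintype.card l - re (Qᴴ * P).trace)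
      ≤ re ((X * Xᴴ * D)ᴴ * (P - Q)).trace + re ((Y * Yᴴ * D)ᴴ * (Q - P)).trace := by
        rw [add_mul]
        exact add_le_add hσ hτ
    _ = re (((Y * Yᴴ - X * Xᴴ) * D)ᴴ * (Q - P)).trace := by
        simp only [Matrix.sub_mul, conjTranspose_sub, Matrix.mul_sub, trace_sub, map_sub]
        ring
    _ ≤ ‖(Y * Yᴴ - X * Xᴴ) * D‖ * ‖Q - P‖ := re_trace_conjTranspose_mul_le _ _
    _ ≤ √2 * sinTheta X Y * l2OpNorm D * ‖Q - P‖ := by gcongr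

lemma add_mul_norm_polar_sub_le (hX : Xᴴ * X = 1) (hY : Yᴴ * Y = 1)
    (h : SpectralSplitting (Xᴴ * D) V₁ V₂ σ) (h' : SpectralSplitting (Yᴴ * D) U₁ U₂ τ) :
    (σ + τ) * ‖Y * (U₁ * U₁ᴴ) - X * (V₁ * V₁ᴴ)‖ ≤ 2 * √2 * l2OpNorm D * sinTheta X Y := by
  have hle := h.add_mul_card_sub_re_trace_polar_le hX hY h'
  have hsq := norm_sub_sq_eq_re_trace (Y * (U₁ * U₁ᴴ)) (X * (V₁ * V₁ᴴ))
  rw [norm_mul_mul_conjTranspose_sq hX h.left_isometry,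
    norm_mul_mul_conjTranspose_sq hY h'.left_isometry] at hsq
  rcases (norm_nonneg (Y * (U₁ * U₁ᴴ) - X * (V₁ * V₁ᴴ))).eq_or_lt with hzero | hpos
  · rw [← hzero, mul_zero]
    have hD := l2OpNorm_nonneg D
    have hXY := sinTheta_nonneg X Y
    positivity
  · refine le_of_mul_le_mul_right ?_ hpos
    rw [mul_assoc, ← sq, hsq]
    linarith

end Pair

end SpectralSplitting

lemma SpectralSplitting.of_diagonalization [DecidableEq l] [DecidableEq m] [DecidableEq n]
    (e : l ⊕ m ≃ n) {V : Matrix n n 𝕜} (hV : Vᴴ * V = 1) {d : n → ℝ} {σ : ℝ}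
    (hl : ∀ i, σ ≤ d (e (Sum.inl i))) (hr : ∀ j, d (e (Sum.inr j)) = 0) :
    SpectralSplitting (V * diagonal (fun i => (d i : 𝕜)) * Vᴴ) (V.submatrix id (e ∘ Sum.inl))
      (V.submatrix id (e ∘ Sum.inr)) σ := by
  have hH : V * diagonal (fun i => (d i : 𝕜)) * Vᴴ = V.submatrix id (e ∘ Sum.inl) *
      diagonal (fun i => (d (e (Sum.inl i)) : 𝕜)) * (V.submatrix id (e ∘ Sum.inl))ᴴ := by
    rw [mul_diagonal_mul_conjTranspose_eq_add e]
    simp [Function.comp_def, hr]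
  refine ⟨?_, ?_, ?_, ?_, ?_⟩
  · rw [conjTranspose_submatrix_mul_submatrix hV,
      submatrix_one _ (e.injective.comp Sum.inl_injective)]
  · rw [conjTranspose_submatrix_mul_submatrix hV,
      submatrix_one _ (e.injective.comp Sum.inr_injective)]
  · have hone := mul_diagonal_mul_conjTranspose_eq_add e V fun _ => 1
    simpa [Function.comp_def, mul_eq_one_comm.mp hV] using hone.symm
  · have hzero : (1 : Matrix n n 𝕜).submatrix (e ∘ Sum.inl) (e ∘ Sum.inr) = 0 := by
      ext i j
      simp [one_apply]
    rw [hH, Matrix.mul_assoc, conjTranspose_submatrix_mul_submatrix hV, hzero, Matrix.mul_zero]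
  · have hgap : (diagonal fun i => ((d (e (Sum.inl i)) - σ : ℝ) : 𝕜)).PosSemidef :=
      PosSemidef.diagonal fun i => by simpa using hl i
    convert hgap.mul_mul_conjTranspose_same (V.submatrix id (e ∘ Sum.inl)) using 1
    rw [hH]
    simp only [ofReal_sub, ← diagonal_sub, ← smul_one_eq_diagonal, Matrix.mul_sub, Matrix.sub_mul,
      Matrix.mul_smul, Matrix.smul_mul, Matrix.mul_one]

theorem hausdorff_bound_general {p : Type*} [Fintype p] [DecidableEq l] [DecidableEq m]
    [DecidableEq n] {D X Y : Matrix p n 𝕜} {V₁ U₁ : Matrix n l 𝕜} {V₂ U₂ : Matrix n m 𝕜} {σ τ : ℝ}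
    (hX : Xᴴ * X = 1) (hY : Yᴴ * Y = 1) (h : SpectralSplitting (Xᴴ * D) V₁ V₂ σ)
    (h' : SpectralSplitting (Yᴴ * D) U₁ U₂ τ) (hστ : 0 < σ + τ) (T : Matrix m m 𝕜)
    (hT : Tᴴ * T = 1) :
    ∃ W : Matrix m m 𝕜, Wᴴ * W = 1 ∧
      ‖(Y * U₁ * U₁ᴴ + Y * U₂ * T * U₂ᴴ) - (X * V₁ * V₁ᴴ + X * V₂ * W * V₂ᴴ)‖ ≤
        (√2 + 2 * √2 * l2OpNorm D / (σ + τ) + 2 * √2 * l2OpNorm D / max σ τ) *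
          sinTheta X Y := by
  have hmax : 0 < max σ τ := by linarith [le_max_left σ τ, le_max_right σ τ]
  obtain ⟨W, hW, hright⟩ := h.exists_isometry_norm_right_sub_le hX hY h' hmax hT
  have hleft : ‖Y * (U₁ * U₁ᴴ) - X * (V₁ * V₁ᴴ)‖ ≤
      2 * √2 * l2OpNorm D * sinTheta X Y / (σ + τ) := by
    rw [le_div_iff₀' hστ]
    exact h.add_mul_norm_polar_sub_le hX hY h'
  refine ⟨W, hW, ?_⟩
  calc ‖(Y * U₁ * U₁ᴴ + Y * U₂ * T * U₂ᴴ) - (X * V₁ * V₁ᴴ + X * V₂ * W * V₂ᴴ)‖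
      ≤ ‖Y * (U₁ * U₁ᴴ) - X * (V₁ * V₁ᴴ)‖ + ‖Y * U₂ * T * U₂ᴴ - X * V₂ * W * V₂ᴴ‖ := by
        rw [add_sub_add_comm, Matrix.mul_assoc Y U₁, Matrix.mul_assoc X V₁]
        exact norm_add_le _ _
    _ ≤ 2 * √2 * l2OpNorm D * sinTheta X Y / (σ + τ) +
          (√2 + 2 * √2 * l2OpNorm D / max σ τ) * sinTheta X Y := add_le_add hleft hright
    _ = (√2 + 2 * √2 * l2OpNorm D / (σ + τ) + 2 * √2 * l2OpNorm D / max σ τ) *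
          sinTheta X Y := by ring

lemma frobNorm_eq_norm {m n : ℕ} (A : Matrix (Fin m) (Fin n) ℝ) : frobNorm A = ‖A‖ := by
  rw [frobNorm, ← conjTranspose_eq_transpose_of_trivial, ← re_to_real (x := trace _),
    ← norm_sq_eq_re_trace, Real.sqrt_sq (norm_nonneg A)]

lemma specNorm_eq_l2OpNorm {m n : ℕ} (A : Matrix (Fin m) (Fin n) ℝ) : specNorm A = l2OpNorm A :=
  rfl

lemma sqrt_sub_frobNorm_sq_eq_sinTheta {n k : ℕ} (X Y : Matrix (Fin n) (Fin k) ℝ) :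
    √(k - frobNorm (Xᵀ * Y) ^ 2) = sinTheta X Y := by
  rw [sinTheta, frobNorm_eq_norm, Fintype.card_fin, conjTranspose_eq_transpose_of_trivial]

lemma spectralSplitting_headCols_tailCols {k r : ℕ} (hrk : r < k)
    {H V : Matrix (Fin k) (Fin k) ℝ} {s : Fin k → ℝ} (hV : Vᵀ * V = 1)
    (hH : H = V * diagonal s * Vᵀ) (hs : Antitone s)
    (hzero : ∀ i : Fin k, r ≤ (i : ℕ) → s i = 0) :
    SpectralSplitting H (headCols r hrk.le V) (tailCols r hrk.le V) (s ⟨r - 1, by omega⟩) := by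
  subst hH
  exact SpectralSplitting.of_diagonalization (𝕜 := ℝ)
    (finSumFinEquiv.trans (finCongr (Nat.add_sub_cancel' hrk.le))) hV
    (fun i => hs (Fin.le_def.mpr (Nat.le_sub_one_of_lt i.isLt)))
    (fun j => hzero _ (Nat.le_add_right r j))

end Frobenius

/-- Hausdorff-distance bound (Frobenius norm): for every orthogonal W̃
there is an orthogonal W such that
‖(X̃Ṽ₁Ṽ₁ᵀ + X̃Ṽ₂W̃Ṽ₂ᵀ) − (XV₁V₁ᵀ + XV₂WV₂ᵀ)‖_F ≤
(√2 + 2√2‖D‖₂/(σ_r + σ̃_r) + 4‖D‖₂/max{σ_r, σ̃_r})·√(k − ‖XᵀX̃‖_F²). -/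
theorem hausdorff_bound {n k r : ℕ} (hr : 1 ≤ r) (hrk : r < k) (hkn : k ≤ n)
    (D X Xt : Matrix (Fin n) (Fin k) ℝ)
    (hX : Xᵀ * X = 1) (hXt : Xtᵀ * Xt = 1)
    (hpsd : (Xᵀ * D).PosSemidef) (hpsdt : (Xtᵀ * D).PosSemidef)
    (hrank : (Xᵀ * D).rank = r) (hrankt : (Xtᵀ * D).rank = r)
    (V Vt : Matrix (Fin k) (Fin k) ℝ) (hV : Vᵀ * V = 1) (hVt : Vtᵀ * Vt = 1)
    (s st : Fin k → ℝ)
    (hord : ∀ i j : Fin k, i ≤ j → s j ≤ s i)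
    (hordt : ∀ i j : Fin k, i ≤ j → st j ≤ st i)
    (hpos : ∀ i : Fin k, (i : ℕ) < r → 0 < s i)
    (hpost : ∀ i : Fin k, (i : ℕ) < r → 0 < st i)
    (hzero : ∀ i : Fin k, r ≤ (i : ℕ) → s i = 0)
    (hzerot : ∀ i : Fin k, r ≤ (i : ℕ) → st i = 0)
    (hdec : Xᵀ * D = V * Matrix.diagonal s * Vᵀ)
    (hdect : Xtᵀ * D = Vt * Matrix.diagonal st * Vtᵀ) :
    ∀ Wt : Matrix (Fin (k - r)) (Fin (k - r)) ℝ, Wtᵀ * Wt = 1 →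
      ∃ W : Matrix (Fin (k - r)) (Fin (k - r)) ℝ, Wᵀ * W = 1 ∧
        frobNorm ((Xt * headCols r hrk.le Vt * (headCols r hrk.le Vt)ᵀ +
              Xt * tailCols r hrk.le Vt * Wt * (tailCols r hrk.le Vt)ᵀ) -
            (X * headCols r hrk.le V * (headCols r hrk.le V)ᵀ +
              X * tailCols r hrk.le V * W * (tailCols r hrk.le V)ᵀ))
          ≤ (Real.sqrt 2 +
              2 * Real.sqrt 2 * specNorm D /
                (s ⟨r - 1, by omega⟩ + st ⟨r - 1, by omega⟩) +
              4 * specNorm D / max (s ⟨r - 1, by omega⟩) (st ⟨r - 1, by omega⟩)) *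
            Real.sqrt ((k : ℝ) - frobNorm (Xᵀ * Xt) ^ 2) := by
  intro Wt hWt
  have hσ := hpos ⟨r - 1, by omega⟩ (Nat.sub_lt hr one_pos)
  have hτ := hpost ⟨r - 1, by omega⟩ (Nat.sub_lt hr one_pos)
  have h := spectralSplitting_headCols_tailCols hrk hV hdec hord hzero
  have h' := spectralSplitting_headCols_tailCols hrk hVt hdect hordt hzerot
  obtain ⟨W, hW, hle⟩ := hausdorff_bound_general hX hXt h h' (add_pos hσ hτ) Wt hWt
  have hsqrt : 2 * √2 ≤ 4 := by linarith [Real.sqrt_le_self_iff.mpr (.inr (one_le_two (α := ℝ)))]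
  refine ⟨W, hW, ?_⟩
  rw [frobNorm_eq_norm, sqrt_sub_frobNorm_sq_eq_sinTheta, specNorm_eq_l2OpNorm]
  refine hle.trans ?_
  gcongr
  · exact sinTheta_nonneg X Xt
  · exact l2OpNorm_nonneg D
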